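/- On the Lie algebra L₆,₁, with ω = e¹⁴ + e²⁵ - e³⁶ and ρ = -e¹²⁶ - e¹³⁵ + e²³⁴ + e⁴⁵⁶, one has ω ∧ ρ = 0. -/

import Mathlib

/-!
STATEMENT 9: On the Lie algebra L₆,₁, with ω = e¹⁴ + e²⁵ - e³⁶ and
ρ = -e¹²⁶ - e¹³⁵ + e²³⁴ + e⁴⁵⁶, one has ω ∧ ρ = 0.

Model: indices shifted to 0,…,5; forms encoded by their values on basis tuples;
the wedge of a 2-form and a 3-form is computed by the shuffle formula
(ω∧ρ)(x₁,…,x₅) = (1/(2!·3!)) Σ_{σ∈S₅} sign(σ) ω(x_{σ(1)},x_{σ(2)}) ρ(x_{σ(3)},x_{σ(4)},x_{σ(5)}).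
(The statement ω∧ρ = 0 only involves the forms, not the Lie bracket.)
-/

/-- Value of e^a ∧ e^b on (e_i, e_j). -/
def wf (a b i j : Fin 6) : ℝ :=
  (if a = i then (1:ℝ) else 0) * (if b = j then (1:ℝ) else 0) -
  (if a = j then (1:ℝ) else 0) * (if b = i then (1:ℝ) else 0)

/-- Value of e^a ∧ e^b ∧ e^c on (e_i, e_j, e_k). -/
def tf (a b c i j k : Fin 6) : ℝ :=
  (if a = i then (1:ℝ) else 0) * ((if b = j then (1:ℝ) else 0) * (if c = k then (1:ℝ) else 0)
      - (if b = k then (1:ℝ) else 0) * (if c = j then (1:ℝ) else 0))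
  - (if a = j then (1:ℝ) else 0) * ((if b = i then (1:ℝ) else 0) * (if c = k then (1:ℝ) else 0)
      - (if b = k then (1:ℝ) else 0) * (if c = i then (1:ℝ) else 0))
  + (if a = k then (1:ℝ) else 0) * ((if b = i then (1:ℝ) else 0) * (if c = j then (1:ℝ) else 0)
      - (if b = j then (1:ℝ) else 0) * (if c = i then (1:ℝ) else 0))

/-- Coefficients of ω = e¹⁴ + e²⁵ - e³⁶. -/
def omL61 (i j : Fin 6) : ℝ := wf 0 3 i j + wf 1 4 i j - wf 2 5 i j

/-- Coefficients of ρ = -e¹²⁶ - e¹³⁵ + e²³⁴ + e⁴⁵⁶. -/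
def rhoL61 (i j k : Fin 6) : ℝ :=
  -(tf 0 1 5 i j k) - tf 0 2 4 i j k + tf 1 2 3 i j k + tf 3 4 5 i j k

/-- Basis values of the wedge product ω∧ρ. -/
noncomputable def omrho (a b c d e : Fin 6) : ℝ :=
  (1/12 : ℝ) * ∑ σ : Equiv.Perm (Fin 5),
    ((Equiv.Perm.sign σ : ℤ) : ℝ) *
      omL61 (![a,b,c,d,e] (σ 0)) (![a,b,c,d,e] (σ 1)) *
        rhoL61 (![a,b,c,d,e] (σ 2)) (![a,b,c,d,e] (σ 3)) (![a,b,c,d,e] (σ 4))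

open Equiv Matrix
open scoped Nat

/-!
Wedging basis one-forms amounts to concatenating their indices, and a repeated index gives zero.
Each monomial of ρ takes one index from each of the pairs {1,4}, {2,5}, {3,6}, whereas the
monomials of ω are exactly these pairs; so every monomial of ω ∧ ρ repeats a one-form.
-/

section DetExpansion

variable {k m n R : Type*} [Fintype k] [DecidableEq k] [Fintype m] [DecidableEq m]
  [Fintype n] [DecidableEq n] [CommRing R]

theorem det_submatrix_mul_det_submatrix_eq_sum (M : Matrix k k R) (e : m ⊕ n ≃ k) (σ : Perm k) :
    (M.submatrix (σ ∘ e ∘ Sum.inl) (e ∘ Sum.inl)).det *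
        (M.submatrix (σ ∘ e ∘ Sum.inr) (e ∘ Sum.inr)).det =
      ∑ τ : Perm m × Perm n, ((e.permCongr (τ.1.sumCongr τ.2)).sign : ℤ) *
        ∏ i, M ((σ * e.permCongr (τ.1.sumCongr τ.2)) i) i := by
  rw [det_apply', det_apply', Finset.sum_mul_sum, ← Finset.sum_product']
  refine Finset.sum_congr rfl fun τ _ => ?_
  rw [Perm.sign_permCongr, Perm.sign_sumCongr, ← e.prod_comp, Fintype.prod_sum_type]
  simp only [submatrix_apply, Function.comp_apply, Perm.mul_apply, permCongr_apply,
    symm_apply_apply, sumCongr_apply, Sum.map_inl, Sum.map_inr, Units.val_mul, Int.cast_mul]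
  ring

/-- Permuting rows within a block is absorbed by reindexing the outer sum, so each of the
`m! * n!` pairs of inner permutations contributes a full determinant. -/
theorem sum_sign_mul_det_submatrix_mul_det_submatrix (M : Matrix k k R) (e : m ⊕ n ≃ k) :
    ∑ σ : Perm k, (σ.sign : ℤ) *
        ((M.submatrix (σ ∘ e ∘ Sum.inl) (e ∘ Sum.inl)).det *
          (M.submatrix (σ ∘ e ∘ Sum.inr) (e ∘ Sum.inr)).det) =
      ((Fintype.card m)! * (Fintype.card n)! : ℕ) * M.det := by
  have sum_translate (π : Perm k) :
      ∑ σ : Perm k, ((σ.sign : ℤ) : R) * (((π.sign : ℤ) : R) * ∏ i, M ((σ * π) i) i) = M.det := by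
    simp only [det_apply', ← mul_assoc, ← Int.cast_mul, ← Units.val_mul, ← Perm.sign_mul]
    exact Equiv.sum_comp (Equiv.mulRight π) fun σ : Perm k => ((σ.sign : ℤ) : R) * ∏ i, M (σ i) i
  simp_rw [det_submatrix_mul_det_submatrix_eq_sum, Finset.mul_sum]
  rw [Finset.sum_comm]
  simp only [sum_translate, Finset.sum_const, Finset.card_univ, Fintype.card_prod,
    Fintype.card_perm, nsmul_eq_mul]

end DetExpansion

section CoefficientForms

variable {ι R : Type*} [CommRing R] {p q : ℕ}

/-- The antisymmetrized product of a `p`-form and a `q`-form, each given by its values on tuples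
of basis vectors. It is left unnormalized, so it is `p! * q!` times the wedge product, which
avoids dividing in `R`. -/
def altProduct :
    ((Fin p → ι) → R) →ₗ[R] ((Fin q → ι) → R) →ₗ[R] ((Fin (p + q) → ι) → R) :=
  LinearMap.mk₂ R
    (fun α β x => ∑ σ : Perm (Fin (p + q)), ((σ.sign : ℤ) : R) *
      (α (x ∘ σ ∘ Fin.castAdd q) * β (x ∘ σ ∘ Fin.natAdd p)))
    (fun α α' β => by
      ext x; simp only [Pi.add_apply, add_mul, mul_add, Finset.sum_add_distrib])
    (fun c α β => by
      ext x; simp only [Pi.smul_apply, smul_eq_mul, Finset.mul_sum, mul_assoc, mul_left_comm])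
    (fun α β β' => by
      ext x; simp only [Pi.add_apply, mul_add, Finset.sum_add_distrib])
    (fun c α β => by
      ext x; simp only [Pi.smul_apply, smul_eq_mul, Finset.mul_sum, mul_left_comm])

theorem altProduct_apply (α : (Fin p → ι) → R) (β : (Fin q → ι) → R) (x : Fin (p + q) → ι) :
    altProduct α β x = ∑ σ : Perm (Fin (p + q)), ((σ.sign : ℤ) : R) *
      (α (x ∘ σ ∘ Fin.castAdd q) * β (x ∘ σ ∘ Fin.natAdd p)) :=
  rfl

variable [DecidableEq ι]

variable (R) in
/-- The monomial form `e^{a 0} ∧ ⋯ ∧ e^{a (p - 1)}`, given by its values on tuples of basis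
vectors: its value on `(e_{x 0}, …, e_{x (p - 1)})` is the determinant of the pairings
`e^{a i} (e_{x j})`, a minor of the identity matrix. -/
def monomialForm (a x : Fin p → ι) : R :=
  ((1 : Matrix ι ι R).submatrix a x).det

theorem monomialForm_eq_zero_of_not_injective {a : Fin p → ι} (ha : ¬ a.Injective) :
    monomialForm R a = 0 := by
  obtain ⟨i, j, haij, hij⟩ := Function.not_injective_iff.mp ha
  ext x
  exact det_zero_of_row_eq hij <| congrArg (fun c => (1 : Matrix ι ι R) c ∘ x) haij

theorem altProduct_monomialForm (a : Fin p → ι) (b : Fin q → ι) :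
    altProduct (monomialForm R a) (monomialForm R b) =
      (p ! * q ! : ℕ) • monomialForm R (Fin.append a b) := by
  ext x
  have det_expansion := sum_sign_mul_det_submatrix_mul_det_submatrix
    ((1 : Matrix ι ι R).submatrix (Fin.append a b) x)ᵀ finSumFinEquiv
  simp only [← transpose_submatrix, det_transpose, submatrix_submatrix, Function.comp_def,
    finSumFinEquiv_apply_left, finSumFinEquiv_apply_right, Fin.append_left, Fin.append_right,
    Fintype.card_fin] at det_expansion
  rw [altProduct_apply, Pi.smul_apply, nsmul_eq_mul]
  exact det_expansion

theorem altProduct_monomialForm_eq_zero_of_exists_eq {a : Fin p → ι} {b : Fin q → ι}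
    (h : ∃ i j, a i = b j) : altProduct (monomialForm R a) (monomialForm R b) = 0 := by
  obtain ⟨i, j, hij⟩ := h
  have not_injective : ¬ (Fin.append a b).Injective :=
    fun hinj => (Fin.append_injective_iff.mp hinj).2.2 i j hij
  rw [altProduct_monomialForm, monomialForm_eq_zero_of_not_injective not_injective, smul_zero]

end CoefficientForms

section L61

/-- The form ω, with `omL61` uncurried to a function of pairs of basis indices. -/
def omegaForm (v : Fin 2 → Fin 6) : ℝ := omL61 (v 0) (v 1)

/-- The form ρ, with `rhoL61` uncurried to a function of triples of basis indices. -/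
def rhoForm (v : Fin 3 → Fin 6) : ℝ := rhoL61 (v 0) (v 1) (v 2)

theorem wf_eq_monomialForm (a b : Fin 6) (v : Fin 2 → Fin 6) :
    wf a b (v 0) (v 1) = monomialForm ℝ ![a, b] v := by
  rw [monomialForm, det_fin_two]
  rfl

theorem tf_eq_monomialForm (a b c : Fin 6) (v : Fin 3 → Fin 6) :
    tf a b c (v 0) (v 1) (v 2) = monomialForm ℝ ![a, b, c] v := by
  rw [monomialForm, det_fin_three]
  simp only [tf, mul_sub, ← mul_assoc, ← sub_add, add_sub]
  rfl

theorem omegaForm_eq_sum_monomialForm :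
    omegaForm = monomialForm ℝ ![0, 3] + monomialForm ℝ ![1, 4] - monomialForm ℝ ![2, 5] := by
  ext v
  simp only [omegaForm, omL61, wf_eq_monomialForm, Pi.add_apply, Pi.sub_apply]

theorem rhoForm_eq_sum_monomialForm :
    rhoForm = -monomialForm ℝ ![0, 1, 5] - monomialForm ℝ ![0, 2, 4] +
      monomialForm ℝ ![1, 2, 3] + monomialForm ℝ ![3, 4, 5] := by
  ext v
  simp only [rhoForm, rhoL61, tf_eq_monomialForm, Pi.add_apply, Pi.sub_apply, Pi.neg_apply]

theorem altProduct_monomialForm_rhoForm (k : Fin 6) :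
    altProduct (monomialForm ℝ ![k, k + 3]) rhoForm = 0 := by
  have h₀₁₅ : ∃ i j, ![k, k + 3] i = ![0, 1, 5] j := by decide +revert
  have h₀₂₄ : ∃ i j, ![k, k + 3] i = ![0, 2, 4] j := by decide +revert
  have h₁₂₃ : ∃ i j, ![k, k + 3] i = ![1, 2, 3] j := by decide +revert
  have h₃₄₅ : ∃ i j, ![k, k + 3] i = ![3, 4, 5] j := by decide +revert
  simp only [rhoForm_eq_sum_monomialForm, map_add, map_sub, map_neg,
    altProduct_monomialForm_eq_zero_of_exists_eq, h₀₁₅, h₀₂₄, h₁₂₃, h₃₄₅, neg_zero, sub_zero,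
    add_zero]

theorem altProduct_omegaForm_rhoForm : altProduct omegaForm rhoForm = 0 := by
  have h₀₃ : altProduct (monomialForm ℝ ![0, 3]) rhoForm = 0 :=
    altProduct_monomialForm_rhoForm 0
  have h₁₄ : altProduct (monomialForm ℝ ![1, 4]) rhoForm = 0 :=
    altProduct_monomialForm_rhoForm 1
  have h₂₅ : altProduct (monomialForm ℝ ![2, 5]) rhoForm = 0 :=
    altProduct_monomialForm_rhoForm 2
  rw [omegaForm_eq_sum_monomialForm, map_sub, map_add, LinearMap.sub_apply, LinearMap.add_apply,
    h₀₃, h₁₄, h₂₅, add_zero, sub_zero]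

theorem omrho_eq_altProduct (a b c d e : Fin 6) :
    omrho a b c d e = 1 / 12 * altProduct omegaForm rhoForm ![a, b, c, d, e] := by
  simp only [omrho, altProduct_apply, mul_assoc]
  rfl

end L61

/-- ω ∧ ρ = 0 on L₆,₁. -/
theorem L61_omega_wedge_rho : ∀ a b c d e : Fin 6, omrho a b c d e = 0 := by
  intro a b c d e
  rw [omrho_eq_altProduct, altProduct_omegaForm_rhoForm, Pi.zero_apply, mul_zero]
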